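/- For all integers k ≥ 3 and r ≥ 2 it holds that h_r(k) ≥ max{f(k), g_r(k)}. -/

import Mathlib

open Finset

def HyperUniform {V : Type*} (k : ℕ) (H : Finset (Finset V)) : Prop := ∀ e ∈ H, e.card = k

def IsPM {V : Type*} [Fintype V] (H M : Finset (Finset V)) : Prop :=
  M ⊆ H ∧ (∀ e ∈ M, ∀ f ∈ M, e ≠ f → Disjoint e f) ∧ ∀ v : V, ∃ e ∈ M, v ∈ e

def hdeg {V : Type*} [DecidableEq V] (H : Finset (Finset V)) (v : V) : ℕ :=
  (H.filter (fun e => v ∈ e)).card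

def IsVec (k r : ℕ) (a : ℕ → ℕ) : Prop :=
  (∀ i j : ℕ, i ≤ j → j < r → a i ≤ a j) ∧ (∑ i ∈ Finset.range r, a i) = k - 1

noncomputable def gfun (k r : ℕ) (a : ℕ → ℕ) : ℝ :=
  (((k - 1).factorial : ℝ) / (∏ i ∈ Finset.range r, ((a i).factorial : ℝ))) *
    (∏ i ∈ Finset.range r, (((r * a i + 1 : ℕ) : ℝ) / ((r * k : ℕ) : ℝ)) ^ (a i)) *
    (1 + ((a 0 : ℝ) / ((r * a 0 + 1 : ℕ) : ℝ)) *
      ∑ i ∈ Finset.Ico 1 r, ((r * a i + 1 : ℕ) : ℝ) / ((a i + 1 : ℕ) : ℝ))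

noncomputable def gThr (k r : ℕ) : ℝ :=
  sSup {x : ℝ | ∃ a : ℕ → ℕ, IsVec k r a ∧ x = gfun k r a}

noncomputable def mThr (k n : ℕ) : ℕ :=
  sInf {m : ℕ | ∀ H : Finset (Finset (Fin n)), HyperUniform k H →
    (∀ v : Fin n, m ≤ hdeg H v) → ∃ M, IsPM H M}

noncomputable def fThr (k : ℕ) : ℝ :=
  Filter.limsup (fun n : ℕ => (mThr k n : ℝ) / ((n - 1).choose (k - 1) : ℝ))
    (Filter.atTop ⊓ Filter.principal {n : ℕ | k ∣ n})

def DiscProp (k r : ℕ) (h : ℝ) : Prop :=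
  ∀ ε : ℝ, 0 < ε → ∃ δ : ℝ, 0 < δ ∧ ∃ n₀ : ℕ, ∀ n : ℕ, n₀ ≤ n → k ∣ n →
    ∀ H : Finset (Finset (Fin n)), HyperUniform k H →
      (∀ v : Fin n, (h + ε) * (((n - 1).choose (k - 1) : ℕ) : ℝ) ≤ (hdeg H v : ℝ)) →
      ∀ c : Finset (Fin n) → Fin r,
        ∃ M, IsPM H M ∧ ∃ i : Fin r,
          (n : ℝ) / ((r : ℝ) * (k : ℝ)) + δ * (n : ℝ) ≤
            ((M.filter (fun e => c e = i)).card : ℝ)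

noncomputable def hThr (k r : ℕ) : ℝ :=
  sInf {h : ℝ | 0 < h ∧ DiscProp k r h}

/-!
Given `a`, split `n = r * k * m` vertices into `r` classes of sizes `(r * a l + 1) * m`, and take as
edges of colour `i` the `k`-sets that meet class `i` in `a i + 1` vertices and every other class `l`
in `a l` vertices. A perfect matching has `r * m` edges, so it covers `r * m * a l` vertices of
class `l` plus one for each of its edges of colour `l`; hence it uses every colour exactly
`m = n / (r * k)` times and no colour has a surplus. The normalised vertex degrees converge to
constants depending only on the class, and the least of them, attained where `a l` is smallest, is
`g_r(a)`. The bound by `f(k)` holds because the matchings promised by `h_r(k)` are perfect.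
-/

open Filter Asymptotics
open scoped Nat Topology

section Profile

variable {V ι : Type*}

/-- The class sizes of the extremal construction for `a`, in units of `n / (r * k)`. They are chosen
so that every perfect matching uses each colour equally often. -/
def classSize [Fintype ι] (a : ι → ℕ) (l : ι) : ℕ := Fintype.card ι * a l + 1

lemma sum_classSize [Fintype ι] (a : ι → ℕ) :
    ∑ l, classSize a l = Fintype.card ι * (∑ l, a l + 1) := by
  simp [classSize, sum_add_distrib, mul_sum, mul_add]

variable [DecidableEq ι]

/-- The vector of intersection sizes of `e` with the classes `p ⁻¹' {l}` of the vertex partition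
`p`. -/
def profile (p : V → ι) (e : Finset V) (l : ι) : ℕ := #{x ∈ e | p x = l}

lemma sum_profile [Fintype ι] (p : V → ι) (e : Finset V) : ∑ l, profile p e l = #e :=
  (card_eq_sum_card_fiberwise fun _ _ ↦ mem_coe.2 (mem_univ _)).symm

lemma profile_erase_add_single [DecidableEq V] (p : V → ι) {e : Finset V} {v : V} (hv : v ∈ e) :
    profile p (e.erase v) + Pi.single (p v) 1 = profile p e := by
  ext l
  rcases eq_or_ne l (p v) with rfl | hl
  · simp only [profile, filter_erase, Pi.add_apply, Pi.single_eq_same]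
    exact card_erase_add_one (by simp [hv])
  · simp [profile, filter_erase, hl, hl.symm]

lemma exists_profile_univ_eq [Fintype V] [Fintype ι] (s : ι → ℕ)
    (hs : ∑ l, s l = Fintype.card V) : ∃ p : V → ι, profile p univ = s := by
  have e : V ≃ Σ l, Fin (s l) := Fintype.equivOfCardEq (by simp [hs])
  refine ⟨fun x ↦ (e x).1, funext fun l ↦ ?_⟩
  have fiberEquiv : {x // (e x).1 = l} ≃ Fin (s l) :=
    (e.subtypeEquiv fun _ ↦ Iff.rfl).trans (Equiv.sigmaSubtype l)
  rw [profile, ← Fintype.card_subtype, Fintype.card_congr fiberEquiv, Fintype.card_fin]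

lemma card_filter_profile_eq [Fintype ι] (p : V → ι) (S : Finset V) (b : ι → ℕ) :
    #{e ∈ S.powerset | profile p e = b} = ∏ l, (profile p S l).choose (b l) := by
  classical
  have filter_biUnion_eq : ∀ f ∈ Fintype.piFinset fun l ↦ powersetCard (b l) {x ∈ S | p x = l},
      ∀ l, {x ∈ univ.biUnion f | p x = l} = f l := by
    intro f hf l
    have mem_class : ∀ i x, x ∈ f i → p x = i := fun i x hx ↦
      (mem_filter.1 ((mem_powersetCard.1 (Fintype.mem_piFinset.1 hf i)).1 hx)).2
    ext x
    simp only [mem_filter, mem_biUnion, mem_univ, true_and]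
    exact ⟨fun ⟨⟨i, hi⟩, hx⟩ ↦ (mem_class i x hi).symm.trans hx ▸ hi,
      fun hx ↦ ⟨⟨l, hx⟩, mem_class l x hx⟩⟩
  simp_rw [profile, ← card_powersetCard, ← Fintype.card_piFinset]
  refine card_nbij' (fun e l ↦ {x ∈ e | p x = l}) (fun f ↦ univ.biUnion f) ?_ ?_ ?_ ?_
  · intro e he
    obtain ⟨heS, heb⟩ := mem_filter.1 he
    exact Fintype.mem_piFinset.2 fun l ↦
      mem_powersetCard.2 ⟨filter_subset_filter _ (mem_powerset.1 heS), congrFun heb l⟩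
  · intro f hf
    refine mem_filter.2 ⟨mem_powerset.2 (biUnion_subset.2 fun l _ ↦ ?_), funext fun l ↦ ?_⟩
    · exact (mem_powersetCard.1 (Fintype.mem_piFinset.1 hf l)).1.trans (filter_subset _ _)
    · exact (congrArg card (filter_biUnion_eq f hf l)).trans
        (mem_powersetCard.1 (Fintype.mem_piFinset.1 hf l)).2
  · intro e _
    ext x
    simp
  · exact fun f hf ↦ funext (filter_biUnion_eq f hf)

lemma card_filter_mem_profile_eq_mul [Fintype V] [DecidableEq V] [Fintype ι] (p : V → ι)
    (b : ι → ℕ) (v : V) :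
    #{e | v ∈ e ∧ profile p e = b} * profile p univ (p v) =
      b (p v) * ∏ l, (profile p univ l).choose (b l) := by
  set N := profile p univ
  set N' := profile p (univ.erase v)
  have hN : N' + Pi.single (p v) 1 = N := profile_erase_add_single p (mem_univ v)
  -- The sets of profile `b` that avoid `v` are those contained in `univ.erase v`.
  have split : #{e | v ∈ e ∧ profile p e = b} + ∏ l, (N' l).choose (b l) =
      ∏ l, (N l).choose (b l) := by
    rw [← card_filter_profile_eq, ← card_filter_profile_eq, powerset_univ,
      ← card_filter_add_card_filter_not (s := {e | profile p e = b}) (v ∈ ·), filter_filter,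
      filter_filter]
    congr 2 <;> ext e <;> simp [subset_erase, and_comm]
  have avoid : (∏ l, (N' l).choose (b l)) * N (p v) =
      (∏ l, (N l).choose (b l)) * (N (p v) - b (p v)) := by
    have other : ∏ l ∈ univ.erase (p v), (N' l).choose (b l) =
        ∏ l ∈ univ.erase (p v), (N l).choose (b l) :=
      prod_congr rfl fun l hl ↦ by simp [← hN, ne_of_mem_erase hl]
    have own : (N' (p v)).choose (b (p v)) * N (p v) =
        (N (p v)).choose (b (p v)) * (N (p v) - b (p v)) := by
      simpa [← hN] using Nat.choose_mul_succ_eq (N' (p v)) (b (p v))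
    rw [← mul_prod_erase univ _ (mem_univ (p v)), mul_right_comm, own, other, mul_right_comm,
      mul_prod_erase univ (fun l ↦ (N l).choose (b l)) (mem_univ (p v))]
  rcases le_or_gt (b (p v)) (N (p v)) with hb | hb
  · zify [hb] at split avoid ⊢
    linear_combination (N (p v) : ℤ) * split - avoid
  · have hzero : ∏ l, (N l).choose (b l) = 0 :=
      prod_eq_zero (mem_univ (p v)) (Nat.choose_eq_zero_of_lt hb)
    have : #{e | v ∈ e ∧ profile p e = b} = 0 := by omega
    rw [this, hzero, zero_mul, mul_zero]

/-- The profile of an edge of colour `i` in the extremal construction for `a`. -/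
def edgeProfile (a : ι → ℕ) (i : ι) : ι → ℕ := a + Pi.single i 1

lemma edgeProfile_injective (a : ι → ℕ) : Function.Injective (edgeProfile a) := by
  intro i j hij
  by_contra hne
  simpa [edgeProfile, hne] using congrFun hij i

lemma sum_edgeProfile [Fintype ι] (a : ι → ℕ) (i : ι) :
    ∑ l, edgeProfile a i l = ∑ l, a l + 1 := by
  simp [edgeProfile, sum_add_distrib]

/-- The extremal hypergraph for `a`; an edge of profile `edgeProfile a i` is meant to receive
colour `i`. -/
def profileHypergraph [Fintype V] [Fintype ι] [DecidableEq V] (p : V → ι) (a : ι → ℕ) :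
    Finset (Finset V) := {e | ∃ i, profile p e = edgeProfile a i}

variable [Fintype V] [Fintype ι] [DecidableEq V]

lemma hyperUniform_profileHypergraph (p : V → ι) (a : ι → ℕ) :
    HyperUniform (∑ l, a l + 1) (profileHypergraph p a) := by
  intro e he
  obtain ⟨i, hi⟩ := (mem_filter.1 he).2
  rw [← sum_profile p e, hi, sum_edgeProfile]

lemma exists_profileHypergraph_coloring [Nonempty ι] (p : V → ι) (a : ι → ℕ) :
    ∃ c : Finset V → ι, ∀ e ∈ profileHypergraph p a, profile p e = edgeProfile a (c e) := by
  have color : ∀ e ∈ profileHypergraph p a, ∃ i, profile p e = edgeProfile a i :=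
    fun e he ↦ (mem_filter.1 he).2
  choose! c hc using color
  exact ⟨c, hc⟩

lemma hdeg_profileHypergraph_mul (p : V → ι) (a : ι → ℕ) (v : V) :
    hdeg (profileHypergraph p a) v * profile p univ (p v) =
      ∑ i, edgeProfile a i (p v) *
        ∏ l, (profile p univ l).choose (edgeProfile a i l) := by
  have hdeg_eq : hdeg (profileHypergraph p a) v =
      ∑ i, #{e | v ∈ e ∧ profile p e = edgeProfile a i} := by
    rw [← card_biUnion]
    · rw [hdeg]
      congr 1
      ext e
      simp [profileHypergraph, and_comm]
    · intro i _ j _ hij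
      refine disjoint_filter.2 fun e _ hi hj ↦ hij ?_
      exact edgeProfile_injective a (hi.2.symm.trans hj.2)
  simp_rw [hdeg_eq, sum_mul, card_filter_mem_profile_eq_mul]

end Profile

section PerfectMatching

variable {V : Type*} [Fintype V] {H M : Finset (Finset V)}

lemma IsPM.sum_sum {A : Type*} [AddCommMonoid A] (hM : IsPM H M) (f : V → A) :
    ∑ e ∈ M, ∑ x ∈ e, f x = ∑ x, f x := by
  classical
  have cover : M.biUnion id = univ := by
    ext x
    simpa using hM.2.2 x
  simp_rw [← cover, sum_biUnion (t := id) hM.2.1, id]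

lemma IsPM.card_mul {k : ℕ} (hM : IsPM H M) (hH : HyperUniform k H) :
    #M * k = Fintype.card V := by
  have h := hM.sum_sum fun _ ↦ 1
  simp only [← card_eq_sum_ones, card_univ] at h
  rw [← h, sum_const_nat fun e he ↦ hH e (hM.1 he)]

lemma IsPM.profile_univ {ι : Type*} [DecidableEq ι] (hM : IsPM H M) (p : V → ι) (l : ι) :
    profile p univ l = ∑ e ∈ M, profile p e l := by
  simp_rw [profile, card_filter]
  exact (hM.sum_sum _).symm

lemma IsPM.profile_univ_of_coloring {ι : Type*} [DecidableEq ι] (hM : IsPM H M) (p : V → ι)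
    (a : ι → ℕ) (c : Finset V → ι) (hc : ∀ e ∈ H, profile p e = edgeProfile a (c e)) (i : ι) :
    profile p univ i = #M * a i + #{e ∈ M | c e = i} := by
  rw [hM.profile_univ, card_filter, ← smul_eq_mul, ← sum_const, ← sum_add_distrib]
  refine sum_congr rfl fun e he ↦ ?_
  simp [hc e (hM.1 he), edgeProfile, Pi.single_apply, eq_comm]

lemma IsPM.card_filter_color_eq {ι : Type*} [Fintype ι] [DecidableEq ι] [DecidableEq V]
    {p : V → ι} {a : ι → ℕ} {m : ℕ} (hM : IsPM (profileHypergraph p a) M)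
    (hp : ∀ l, profile p univ l = classSize a l * m) {c : Finset V → ι}
    (hc : ∀ e ∈ profileHypergraph p a, profile p e = edgeProfile a (c e)) (i : ι) :
    #{e ∈ M | c e = i} = m := by
  have card_M : #M = Fintype.card ι * m := by
    refine Nat.eq_of_mul_eq_mul_right (Nat.succ_pos (∑ l, a l)) ?_
    rw [hM.card_mul (hyperUniform_profileHypergraph p a), ← card_univ, ← sum_profile p]
    simp_rw [hp]
    rw [← sum_mul, sum_classSize, mul_right_comm]
  have class_count := hM.profile_univ_of_coloring p a c hc i
  rw [hp, card_M, classSize, add_mul, one_mul, mul_right_comm] at class_count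
  exact (add_left_cancel class_count).symm

end PerfectMatching

section LimitDegree

variable {ι : Type*} [Fintype ι]

lemma tendsto_choose_mul_div_pow (s c : ℕ) :
    Tendsto (fun m : ℕ ↦ ((s * m).choose c : ℝ) / m ^ c) atTop (𝓝 ((s : ℝ) ^ c / c !)) := by
  rcases s.eq_zero_or_pos with rfl | hs
  · cases c <;> simp
  have hequiv : (fun m : ℕ ↦ ((s * m).choose c : ℝ)) ~[atTop]
      fun m : ℕ ↦ ((s * m : ℕ) : ℝ) ^ c / c ! :=
    (isEquivalent_choose c).comp_tendsto (tendsto_id.const_mul_atTop' hs)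
  refine ((hequiv.div (IsEquivalent.refl (u := fun m : ℕ ↦ (m : ℝ) ^ c))).symm).tendsto_nhds
    (tendsto_const_nhds.congr' ?_)
  filter_upwards [eventually_gt_atTop 0] with m hm
  simp only [Nat.cast_mul, mul_pow, Pi.div_apply]
  field_simp

lemma tendsto_choose_pred_div_pow {t : ℕ} (ht : 0 < t) (d : ℕ) :
    Tendsto (fun m : ℕ ↦ ((t * m - 1).choose d : ℝ) / m ^ d) atTop (𝓝 ((t : ℝ) ^ d / d !)) := by
  have h := (tendsto_choose_mul_div_pow t (d + 1)).mul_const (((d : ℝ) + 1) / t)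
  convert! h.congr' ?_ using 2
  · rw [Nat.factorial_succ, pow_succ]
    push_cast
    field_simp
  · filter_upwards [eventually_gt_atTop 0] with m hm
    have absorb : (t * m : ℝ) * (t * m - 1).choose d = (t * m).choose (d + 1) * (d + 1) := by
      have h := Nat.add_one_mul_choose_eq (t * m - 1) d
      rw [Nat.sub_add_cancel (Nat.mul_pos ht hm)] at h
      exact_mod_cast h
    rw [div_mul_div_comm, ← absorb, pow_succ]
    field_simp

/-- The limit as `m → ∞` of the degree of a vertex of class `j` in `profileHypergraph p a`, divided
by the maximal possible degree, when class `l` of `p` has `s l * m` vertices. -/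
noncomputable def limitDegree (s a : ι → ℕ) (j : ι) : ℝ :=
  ((∑ l, a l)! / (∑ l, s l : ℕ) ^ (∑ l, a l)) * (∏ l, (s l : ℝ) ^ a l / (a l)!) *
    (a j / s j * ∑ i, (s i : ℝ) / (a i + 1) + 1 / (a j + 1))

lemma div_mul_add_one_div_le {r x y S : ℝ} (hr : 1 ≤ r) (hx : 0 ≤ x) (hxy : x ≤ y)
    (hS : (r * y + 1) / (y + 1) + (r - 1) * ((r * x + 1) / (x + 1)) ≤ S) :
    x / (r * x + 1) * S + 1 / (x + 1) ≤ y / (r * y + 1) * S + 1 / (y + 1) := by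
  have hy : 0 ≤ y := hx.trans hxy
  set P := (r * x + 1) / (x + 1) with hP
  set Q := (r * y + 1) / (y + 1) with hQ
  have one_le_P : 1 ≤ P := by
    rw [hP, le_div_iff₀ (by positivity)]
    nlinarith
  have P_le : P ≤ r := by
    rw [hP, div_le_iff₀ (by positivity)]
    linarith
  have Q_le : Q ≤ r := by
    rw [hQ, div_le_iff₀ (by positivity)]
    linarith
  have PQ_le : P * Q ≤ S := by
    nlinarith [mul_nonneg (sub_nonneg.2 one_le_P) (sub_nonneg.2 Q_le)]
  have difference : y / (r * y + 1) * S + 1 / (y + 1) - (x / (r * x + 1) * S + 1 / (x + 1)) =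
      (y - x) / ((r * x + 1) * (r * y + 1)) * (S - P * Q) := by
    rw [hP, hQ]
    field_simp
    ring
  rw [← sub_nonneg, difference]
  exact mul_nonneg (div_nonneg (sub_nonneg.2 hxy) (by positivity)) (sub_nonneg.2 PQ_le)

lemma limitDegree_classSize_le_of_forall_le (a : ι → ℕ) {i : ι} (hi : ∀ l, a i ≤ a l) (j : ι) :
    limitDegree (classSize a) a i ≤ limitDegree (classSize a) a j := by
  classical
  set q : ι → ℝ := fun l ↦ (Fintype.card ι * a l + 1) / (a l + 1) with hq
  have hr : (1 : ℝ) ≤ Fintype.card ι := by exact_mod_cast Fintype.card_pos_iff.2 ⟨i⟩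
  have q_le : ∀ l, q i ≤ q l := by
    intro l
    have : (a i : ℝ) ≤ a l := by exact_mod_cast hi l
    rw [hq, div_le_div_iff₀ (by positivity) (by positivity)]
    nlinarith
  have le_sum : q j + (Fintype.card ι - 1) * q i ≤ ∑ l, q l := by
    rw [← add_sum_erase _ _ (mem_univ j), add_le_add_iff_left]
    have h := card_nsmul_le_sum (univ.erase j) q (q i) fun l _ ↦ q_le l
    rwa [card_erase_of_mem (mem_univ j), card_univ, nsmul_eq_mul,
      Nat.cast_pred (Fintype.card_pos_iff.2 ⟨i⟩)] at h
  unfold limitDegree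
  refine mul_le_mul_of_nonneg_left ?_ (by positivity)
  simpa [classSize, hq] using
    div_mul_add_one_div_le hr (a i).cast_nonneg (by exact_mod_cast hi j) le_sum

variable [DecidableEq ι]

lemma prod_pow_div_factorial_edgeProfile (x : ι → ℝ) (a : ι → ℕ) (i : ι) :
    ∏ l, x l ^ edgeProfile a i l / (edgeProfile a i l)! =
      (∏ l, x l ^ a l / (a l)!) * (x i / (a i + 1)) := by
  have factor : ∀ l, x l ^ edgeProfile a i l / (edgeProfile a i l)! =
      x l ^ a l / (a l)! * if l = i then x l / (a l + 1) else 1 := by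
    intro l
    split_ifs with h
    · subst h
      simp only [edgeProfile, Pi.add_apply, Pi.single_eq_same, pow_succ, Nat.factorial_succ]
      push_cast
      field_simp
    · simp [edgeProfile, h]
  simp_rw [factor, prod_mul_distrib, prod_ite_eq', mem_univ, if_true]

lemma sum_edgeProfile_mul_prod (s a : ι → ℕ) {j : ι} (hj : 0 < s j) :
    ∑ i, (edgeProfile a i j : ℝ) *
        ∏ l, (s l : ℝ) ^ edgeProfile a i l / (edgeProfile a i l)! =
      (∏ l, (s l : ℝ) ^ a l / (a l)!) *
        (s j * (a j / s j * ∑ i, (s i : ℝ) / (a i + 1) + 1 / (a j + 1))) := by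
  have expand : ∑ i, (edgeProfile a i j : ℝ) * ((s i : ℝ) / (a i + 1)) =
      a j * ∑ i, (s i : ℝ) / (a i + 1) + s j / (a j + 1) := by
    simp [edgeProfile, Pi.single_apply, add_mul, sum_add_distrib, mul_sum]
  simp_rw [prod_pow_div_factorial_edgeProfile, mul_left_comm _ (∏ _, _), ← mul_sum, expand]
  field_simp

lemma tendsto_sum_edgeProfile_div_pow (s a : ι → ℕ) {j : ι} (hj : 0 < s j) :
    Tendsto (fun m : ℕ ↦ (∑ i, (edgeProfile a i j : ℝ) *
        ∏ l, ((s l * m).choose (edgeProfile a i l) : ℝ)) / m ^ (∑ l, a l + 1))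
      atTop (𝓝 ((∏ l, (s l : ℝ) ^ a l / (a l)!) *
        (s j * (a j / s j * ∑ i, (s i : ℝ) / (a i + 1) + 1 / (a j + 1))))) := by
  rw [← sum_edgeProfile_mul_prod s a hj]
  refine (tendsto_finsetSum univ fun i _ ↦ (tendsto_finsetProd univ fun l _ ↦
    tendsto_choose_mul_div_pow (s l) (edgeProfile a i l)).const_mul _).congr fun m ↦ ?_
  simp_rw [prod_div_distrib, prod_pow_eq_pow_sum, sum_edgeProfile, sum_div, mul_div_assoc]

lemma tendsto_limitDegree (s a : ι → ℕ) {j : ι} (hj : 0 < s j) :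
    Tendsto (fun m : ℕ ↦ (∑ i, (edgeProfile a i j : ℝ) *
        ∏ l, ((s l * m).choose (edgeProfile a i l) : ℝ)) / (s j * m) /
        (((∑ l, s l) * m - 1).choose (∑ l, a l) : ℝ))
      atTop (𝓝 (limitDegree s a j)) := by
  have ht : 0 < ∑ l, s l := hj.trans_le (single_le_sum_of_canonicallyOrdered (mem_univ j))
  have quotient := (tendsto_sum_edgeProfile_div_pow s a hj).div
    ((tendsto_choose_pred_div_pow ht (∑ l, a l)).const_mul (s j : ℝ)) (by positivity)
  convert! quotient.congr' ?_ using 2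
  · rw [limitDegree]
    field_simp
  · filter_upwards [eventually_gt_atTop 0] with m hm
    simp only [Pi.div_apply, pow_succ]
    field_simp

lemma eventually_mul_choose_le_hdeg (s a : ι → ℕ) (hs : ∀ j, 0 < s j) {x : ℝ}
    (hx : ∀ j, x < limitDegree s a j) :
    ∀ᶠ m : ℕ in atTop, ∀ p : Fin ((∑ l, s l) * m) → ι, (∀ l, profile p univ l = s l * m) →
      ∀ v, x * (((∑ l, s l) * m - 1).choose (∑ l, a l) : ℕ) ≤ hdeg (profileHypergraph p a) v := by
  have eventually_le := eventually_all.2 fun j ↦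
    (tendsto_limitDegree s a (hs j)).eventually_const_le (hx j)
  filter_upwards [eventually_le, eventually_ge_atTop (∑ l, a l + 1)] with m hm hdm p hp v
  have hm0 : 0 < m := by omega
  have hsv := hs (p v)
  have ht : 0 < ∑ l, s l :=
    hsv.trans_le (single_le_sum_of_canonicallyOrdered (mem_univ (p v)))
  have choose_pos : 0 < ((∑ l, s l) * m - 1).choose (∑ l, a l) :=
    Nat.choose_pos (by have := Nat.le_mul_of_pos_left m ht; omega)
  have degree : (hdeg (profileHypergraph p a) v : ℝ) * (s (p v) * m) =
      ∑ i, (edgeProfile a i (p v) : ℝ) * ∏ l, ((s l * m).choose (edgeProfile a i l) : ℝ) := by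
    have h := hdeg_profileHypergraph_mul p a v
    simp only [hp] at h
    exact_mod_cast h
  rw [← le_div_iff₀ (by exact_mod_cast choose_pos)]
  refine (hm (p v)).trans_eq ?_
  rw [← degree, mul_div_cancel_right₀ _ (by positivity)]

end LimitDegree

lemma eventually_exists_balanced_coloring {ι : Type*} [Fintype ι] [Nonempty ι] [DecidableEq ι]
    (a : ι → ℕ) {x : ℝ} (hx : ∀ j, x < limitDegree (classSize a) a j) :
    ∀ᶠ m : ℕ in atTop, ∃ (H : Finset (Finset (Fin (Fintype.card ι * (∑ l, a l + 1) * m))))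
      (c : Finset (Fin (Fintype.card ι * (∑ l, a l + 1) * m)) → ι),
      HyperUniform (∑ l, a l + 1) H ∧
      (∀ v, x * ((Fintype.card ι * (∑ l, a l + 1) * m - 1).choose (∑ l, a l) : ℕ) ≤ hdeg H v) ∧
      ∀ M, IsPM H M → ∀ i, #{e ∈ M | c e = i} = m := by
  have degree := eventually_mul_choose_le_hdeg (classSize a) a (fun _ ↦ Nat.succ_pos _) hx
  rw [sum_classSize] at degree
  filter_upwards [degree] with m hm
  obtain ⟨p, hp⟩ := exists_profile_univ_eq
    (V := Fin (Fintype.card ι * (∑ l, a l + 1) * m)) (fun l ↦ classSize a l * m)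
    (by rw [← sum_mul, sum_classSize, Fintype.card_fin])
  obtain ⟨c, hc⟩ := exists_profileHypergraph_coloring p a
  exact ⟨profileHypergraph p a, c, hyperUniform_profileHypergraph p a, hm p (congrFun hp),
    fun M hM ↦ hM.card_filter_color_eq (congrFun hp) hc⟩

lemma gfun_eq_limitDegree {k r : ℕ} [NeZero r] {a : ℕ → ℕ} (ha : ∑ l : Fin r, a l + 1 = k) :
    gfun k r a = limitDegree (classSize fun l : Fin r ↦ a l) (fun l : Fin r ↦ a l) 0 := by
  subst ha
  have hr : 0 < r := Nat.pos_of_neZero r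
  have split : ∑ l : Fin r, ((r * a l + 1 : ℕ) : ℝ) / (a l + 1 : ℕ) =
      ((r * a 0 + 1 : ℕ) : ℝ) / (a 0 + 1 : ℕ) +
        ∑ l ∈ Ico 1 r, ((r * a l + 1 : ℕ) : ℝ) / (a l + 1 : ℕ) := by
    rw [Fin.sum_univ_eq_sum_range (fun l ↦ ((r * a l + 1 : ℕ) : ℝ) / (a l + 1 : ℕ)) r,
      range_eq_Ico, sum_eq_sum_Ico_succ_bot hr]
  have bracket : 1 + (a 0 : ℝ) / (r * a 0 + 1 : ℕ) *
        ∑ l ∈ Ico 1 r, ((r * a l + 1 : ℕ) : ℝ) / (a l + 1 : ℕ) =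
      (a 0 : ℝ) / (r * a 0 + 1 : ℕ) * ∑ l : Fin r, ((r * a l + 1 : ℕ) : ℝ) / (a l + 1 : ℕ) +
        1 / (a 0 + 1) := by
    rw [split]
    push_cast
    field_simp
    ring
  rw [gfun, bracket, limitDegree, sum_classSize, prod_range, prod_range]
  simp only [classSize, Fintype.card_fin, Fin.val_zero, div_pow, prod_div_distrib,
    prod_pow_eq_pow_sum, Nat.add_sub_cancel]
  push_cast
  ring

section Discrepancy

variable {k r : ℕ} {h : ℝ}

lemma DiscProp.exists_limitDegree_le [NeZero r] (hD : DiscProp k r h) (a : Fin r → ℕ)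
    (ha : ∑ l, a l + 1 = k) : ∃ j, limitDegree (classSize a) a j ≤ h := by
  by_contra! hlt
  subst ha
  obtain ⟨x, hx, hhx⟩ := ((eventually_all.2 fun j ↦ Ioo_mem_nhdsGT (hlt j)).and
    self_mem_nhdsWithin).exists
  obtain ⟨δ, hδ, n₀, hmatch⟩ := hD (x - h) (sub_pos.2 hhx)
  have balanced := eventually_exists_balanced_coloring a fun j ↦ (hx j).2
  rw [Fintype.card_fin] at balanced
  obtain ⟨m, ⟨H, c, hH, degree, color_count⟩, hm⟩ :=
    (balanced.and (eventually_ge_atTop (n₀ + 1))).exists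
  have hr : 0 < r := Nat.pos_of_neZero r
  have hm0 : 0 < m := by omega
  obtain ⟨M, hM, i, hi⟩ := hmatch _
    ((Nat.le_of_succ_le hm).trans (Nat.le_mul_of_pos_left m (by positivity)))
    ((dvd_mul_left _ r).mul_right m) H hH (by simpa using degree) c
  have average : ((r * (∑ l, a l + 1) * m : ℕ) : ℝ) / (r * (∑ l, a l + 1 : ℕ)) = m := by
    push_cast
    field_simp
  have surplus : 0 < δ * (r * (∑ l, a l + 1) * m : ℕ) := by positivity
  rw [color_count M hM i, average] at hi
  linarith

lemma HyperUniform.hdeg_le_choose {V : Type*} [Fintype V] [DecidableEq V] {H : Finset (Finset V)}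
    (hH : HyperUniform k H) (v : V) : hdeg H v ≤ (Fintype.card V - 1).choose (k - 1) := by
  rw [← card_univ, ← card_erase_of_mem (mem_univ v), ← card_powersetCard]
  refine card_le_card_of_injOn (fun e ↦ e.erase v) (fun e he ↦ ?_) fun e he f hf hef ↦ ?_
  · obtain ⟨heH, hve⟩ := mem_filter.1 he
    exact mem_powersetCard.2
      ⟨erase_subset_erase _ (subset_univ _), by rw [card_erase_of_mem hve, hH e heH]⟩
  · rw [← insert_erase (mem_filter.1 he).2, ← insert_erase (mem_filter.1 hf).2]
    exact congrArg _ hef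

-- Vacuous: no vertex degree exceeds the maximal possible degree `(n - 1).choose (k - 1)`.
lemma discProp_one (k r : ℕ) : DiscProp k r 1 := by
  refine fun ε hε ↦ ⟨1, one_pos, k + 1, fun n hn _ H hH hdeg_ge _ ↦ ?_⟩
  have hv := (hdeg_ge ⟨0, by omega⟩).trans (Nat.cast_le.2 (hH.hdeg_le_choose _))
  have choose_pos : (0 : ℝ) < ((n - 1).choose (k - 1) : ℕ) := by
    exact_mod_cast Nat.choose_pos (by omega)
  rw [Fintype.card_fin] at hv
  nlinarith

lemma tendsto_choose_pred_atTop (hk : 2 ≤ k) :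
    Tendsto (fun n : ℕ ↦ ((n - 1).choose (k - 1) : ℝ)) atTop atTop := by
  refine ((isEquivalent_choose (k - 1)).tendsto_atTop_iff.2 ?_).comp (tendsto_sub_atTop_nat 1)
  exact ((tendsto_pow_atTop (by omega)).comp tendsto_natCast_atTop_atTop).atTop_div_const
    (by positivity)

lemma DiscProp.mThr_le [NeZero r] (hD : DiscProp k r h) {ε : ℝ} (hε : 0 < ε) :
    ∀ᶠ n in atTop ⊓ 𝓟 {n | k ∣ n}, mThr k n ≤ ⌈(h + ε) * (n - 1).choose (k - 1)⌉₊ := by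
  obtain ⟨δ, -, n₀, hmatch⟩ := hD ε hε
  rw [eventually_inf_principal]
  filter_upwards [eventually_ge_atTop n₀] with n hn hkn
  refine Nat.sInf_le fun H hH hdeg_ge ↦ ?_
  obtain ⟨M, hM, -⟩ := hmatch n hn hkn H hH
    (fun v ↦ (Nat.le_ceil _).trans (by exact_mod_cast hdeg_ge v)) fun _ ↦ 0
  exact ⟨M, hM⟩

lemma DiscProp.fThr_le [NeZero r] (hD : DiscProp k r h) (hk : 2 ≤ k) (hh : 0 ≤ h) :
    fThr k ≤ h := by
  refine le_of_forall_pos_le_add fun ε hε ↦ ?_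
  have neBot : (atTop ⊓ 𝓟 {n | k ∣ n}).NeBot :=
    frequently_mem_iff_neBot.1 (by
      simpa [Nat.modEq_zero_iff_dvd] using Nat.frequently_modEq (by omega : k ≠ 0) 0)
  have ceil_limit := ((tendsto_nat_ceil_mul_div_atTop (add_nonneg hh hε.le)).comp
    (tendsto_choose_pred_atTop hk)).mono_left (inf_le_left (b := 𝓟 {n | k ∣ n}))
  rw [← ceil_limit.limsup_eq]
  refine limsup_le_limsup ?_ ?_ ceil_limit.isBoundedUnder_le
  · filter_upwards [hD.mThr_le hε] with n hn
    dsimp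
    gcongr
  · exact IsCoboundedUnder.of_frequently_ge (a := 0)
      (Eventually.of_forall fun n ↦ by positivity).frequently

lemma DiscProp.gfun_le [NeZero r] (hD : DiscProp k r h) (hk : 1 ≤ k) {a : ℕ → ℕ}
    (ha : IsVec k r a) : gfun k r a ≤ h := by
  have hsum : ∑ l : Fin r, a l + 1 = k := by
    rw [Fin.sum_univ_eq_sum_range a r, ha.2, Nat.sub_add_cancel hk]
  obtain ⟨j, hj⟩ := hD.exists_limitDegree_le (fun l : Fin r ↦ a l) hsum
  rw [gfun_eq_limitDegree hsum]
  have min_at_zero : ∀ l : Fin r, a (0 : Fin r) ≤ a l := fun l ↦ ha.1 _ _ (by simp) l.2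
  exact (limitDegree_classSize_le_of_forall_le (fun l : Fin r ↦ a l) min_at_zero j).trans hj

end Discrepancy

theorem discrepancy_threshold_lower_bound_general (k r : ℕ) (hk : 2 ≤ k) (hr : 1 ≤ r) :
    max (fThr k) (gThr k r) ≤ hThr k r := by
  have : NeZero r := ⟨by omega⟩
  refine le_csInf ⟨1, one_pos, discProp_one k r⟩ ?_
  rintro h ⟨hh, hD⟩
  refine max_le (hD.fThr_le hk hh.le) (Real.sSup_le ?_ hh.le)
  rintro _ ⟨a, ha, rfl⟩
  exact hD.gfun_le (by omega) ha

theorem discrepancy_threshold_lower_bound (k r : ℕ) (hk : 3 ≤ k) (hr : 2 ≤ r) :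
    max (fThr k) (gThr k r) ≤ hThr k r :=
  discrepancy_threshold_lower_bound_general k r (by omega) (by omega)
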